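/- There exists a constant κ₂ > 0 such that, defining for admissible u₁, u₂ : [0,1] → ℂ the functional J(u₁,u₂) = ∫₀¹ |u₁'(x) − u₂'(x)|² dx − Re ∫₀¹ u₁(x) u₂(x) (conj(u₁(x)) − conj(u₂(x)))² dx + κ₂ (Φ(u₁) + Φ(u₂)) ∫₀¹ |u₁(x) − u₂(x)|² dx, one has the lower bound J(u₁,u₂) ≥ ∫₀¹ |u₁'(x) − u₂'(x)|² dx + (1/2) κ₂ (Φ(u₁) + Φ(u₂)) ∫₀¹ |u₁(x) − u₂(x)|² dx for all admissible u₁, u₂. -/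

import Mathlib

open MeasureTheory intervalIntegral

/-- A function `u : [0,1] → ℂ` is admissible if it is continuously differentiable
(with derivative `u'`) and satisfies the Dirichlet boundary conditions
`u 0 = 0`, `u 1 = 0`. -/
def Admissible (u u' : ℝ → ℂ) : Prop :=
  (∀ x ∈ Set.Icc (0:ℝ) 1, HasDerivAt u (u' x) x) ∧
    ContinuousOn u' (Set.Icc (0:ℝ) 1) ∧ u 0 = 0 ∧ u 1 = 0

/-- The Lyapunov functional
`Φ(u) = ‖u'‖₂² − (1/2)‖u‖₄⁴ + κ(‖u‖₂²)³ + κ(‖u‖₂²)⁹`. -/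
noncomputable def Phi (κ : ℝ) (u u' : ℝ → ℂ) : ℝ :=
  (∫ x in (0:ℝ)..1, ‖u' x‖ ^ 2) - (1 / 2) * (∫ x in (0:ℝ)..1, ‖u x‖ ^ 4)
    + κ * (∫ x in (0:ℝ)..1, ‖u x‖ ^ 2) ^ 3 + κ * (∫ x in (0:ℝ)..1, ‖u x‖ ^ 2) ^ 9

/-- The Foias–Prodi functional
`J(u₁,u₂) = ‖u₁' − u₂'‖₂² − Re ∫ u₁ u₂ (conj u₁ − conj u₂)²
            + κ₂ (Φ(u₁) + Φ(u₂)) ‖u₁ − u₂‖₂²`. -/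
noncomputable def Jfun (κ κ₂ : ℝ) (u₁ u₁' u₂ u₂' : ℝ → ℂ) : ℝ :=
  (∫ x in (0:ℝ)..1, ‖u₁' x - u₂' x‖ ^ 2)
    - (∫ x in (0:ℝ)..1,
        u₁ x * u₂ x * ((starRingEnd ℂ) (u₁ x) - (starRingEnd ℂ) (u₂ x)) ^ 2).re
    + κ₂ * (Phi κ u₁ u₁' + Phi κ u₂ u₂') * (∫ x in (0:ℝ)..1, ‖u₁ x - u₂ x‖ ^ 2)

/-!
A path starting at `0` satisfies `‖u x‖² ≤ x ∫₀ˣ ‖u'‖²` by the Cauchy–Schwarz inequality, so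
`‖u₁ u₂‖ ≤ (‖u₁‖² + ‖u₂‖²) / 2` bounds the quartic term of `J` by
`(1/2) (‖u₁'‖₂² + ‖u₂'‖₂²) ‖u₁ - u₂‖₂²`. The Gagliardo–Nirenberg inequality gives
`‖u'‖₂² ≤ 2 Φ(u)`, so for `κ₂ = 2` half of the `κ₂`-term of `J` absorbs the quartic term.
-/

theorem sq_integral_le_measureReal_univ_mul_integral_sq {α : Type*} {_ : MeasurableSpace α}
    {μ : Measure α} [IsFiniteMeasure μ] {f : α → ℝ} (hf : MemLp f 2 μ) :
    (∫ x, f x ∂μ) ^ 2 ≤ μ.real Set.univ * ∫ x, f x ^ 2 ∂μ := by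
  rcases eq_zero_or_neZero μ with rfl | _
  · simp
  have jensen : (⨍ x, f x ∂μ) ^ 2 ≤ ⨍ x, f x ^ 2 ∂μ :=
    even_two.convexOn_pow.map_average_le (continuous_pow 2).continuousOn isClosed_univ
      (by simp) (hf.integrable one_le_two) hf.integrable_sq
  calc (∫ x, f x ∂μ) ^ 2
      = μ.real Set.univ ^ 2 * (⨍ x, f x ∂μ) ^ 2 := by
        rw [← mul_pow, ← smul_eq_mul (μ.real _), measure_smul_average]
    _ ≤ μ.real Set.univ ^ 2 * ⨍ x, f x ^ 2 ∂μ := by gcongr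
    _ = μ.real Set.univ * ∫ x, f x ^ 2 ∂μ := by
        rw [sq, mul_assoc, ← smul_eq_mul (μ.real _) (⨍ x, f x ^ 2 ∂μ), measure_smul_average]

theorem norm_sub_sq_le_sub_mul_integral_norm_deriv_sq {E : Type*} [NormedAddCommGroup E]
    [NormedSpace ℝ E] {f f' : ℝ → E} {a b : ℝ} (hab : a ≤ b)
    (hcont : ContinuousOn f (Set.Icc a b)) (hderiv : ∀ x ∈ Set.Ioo a b, HasDerivAt f (f' x) x)
    (hf' : MemLp f' 2 (volume.restrict (Set.Ioc a b))) :
    ‖f b - f a‖ ^ 2 ≤ (b - a) * ∫ x in a..b, ‖f' x‖ ^ 2 := by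
  have norm_integrable : IntervalIntegrable (fun x ↦ ‖f' x‖) volume a b :=
    (intervalIntegrable_iff_integrableOn_Ioc_of_le hab).2 (hf'.norm.integrable one_le_two)
  have displacement : ‖f b - f a‖ ≤ ∫ x in a..b, ‖f' x‖ :=
    norm_sub_le_integral_of_norm_deriv_le_of_le hab hcont
      (fun x hx ↦ (hderiv x hx).differentiableAt.differentiableWithinAt)
      (.of_forall fun x hx ↦ by rw [(hderiv x hx).deriv]) norm_integrable
  calc ‖f b - f a‖ ^ 2
      ≤ (∫ x in a..b, ‖f' x‖) ^ 2 := by gcongr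
    _ ≤ (b - a) * ∫ x in a..b, ‖f' x‖ ^ 2 := by
        simpa [integral_of_le hab, hab] using
          sq_integral_le_measureReal_univ_mul_integral_sq hf'.norm

section QuarticTerm

variable {𝕜 : Type*} [RCLike 𝕜]

theorem norm_mul_mul_conj_sub_sq_le (z w : 𝕜) :
    ‖z * w * (starRingEnd 𝕜 z - starRingEnd 𝕜 w) ^ 2‖ ≤
      (‖z‖ ^ 2 + ‖w‖ ^ 2) / 2 * ‖z - w‖ ^ 2 := by
  rw [norm_mul, norm_mul, norm_pow, ← map_sub, RCLike.norm_conj]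
  gcongr
  linarith [two_mul_le_add_sq ‖z‖ ‖w‖]

theorem norm_integral_mul_mul_conj_sub_sq_le {α : Type*} {_ : MeasurableSpace α}
    {μ : Measure α} {u v : α → 𝕜} {A B : ℝ}
    (hu : ∀ᵐ x ∂μ, ‖u x‖ ^ 2 ≤ A) (hv : ∀ᵐ x ∂μ, ‖v x‖ ^ 2 ≤ B)
    (huv : Integrable (fun x ↦ ‖u x - v x‖ ^ 2) μ) :
    ‖∫ x, u x * v x * (starRingEnd 𝕜 (u x) - starRingEnd 𝕜 (v x)) ^ 2 ∂μ‖ ≤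
      (A + B) / 2 * ∫ x, ‖u x - v x‖ ^ 2 ∂μ := by
  rw [← MeasureTheory.integral_const_mul]
  refine MeasureTheory.norm_integral_le_of_norm_le (huv.const_mul _) ?_
  filter_upwards [hu, hv] with x hux hvx
  exact (norm_mul_mul_conj_sub_sq_le _ _).trans (by gcongr)

end QuarticTerm

namespace Admissible

variable {u u' v v' : ℝ → ℂ}

protected theorem continuousOn (h : Admissible u u') : ContinuousOn u (Set.Icc 0 1) :=
  HasDerivAt.continuousOn h.1

theorem norm_sq_le_integral_norm_deriv_sq (h : Admissible u u') {x : ℝ}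
    (hx : x ∈ Set.Icc (0 : ℝ) 1) : ‖u x‖ ^ 2 ≤ ∫ t in (0 : ℝ)..1, ‖u' t‖ ^ 2 := by
  obtain ⟨hderiv, hcont', hzero, -⟩ := h
  have hsub : Set.Icc 0 x ⊆ Set.Icc 0 1 := Set.Icc_subset_Icc_right hx.2
  have sq_integrable : IntegrableOn (fun t ↦ ‖u' t‖ ^ 2) (Set.Icc 0 1) :=
    (hcont'.norm.pow 2).integrableOn_Icc
  have memLp_deriv : MemLp u' 2 (volume.restrict (Set.Icc 0 1)) :=
    (memLp_two_iff_integrable_sq_norm (hcont'.aestronglyMeasurable measurableSet_Icc)).2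
      sq_integrable
  calc ‖u x‖ ^ 2
      = ‖u x - u 0‖ ^ 2 := by rw [hzero, sub_zero]
    _ ≤ (x - 0) * ∫ t in (0 : ℝ)..x, ‖u' t‖ ^ 2 :=
        norm_sub_sq_le_sub_mul_integral_norm_deriv_sq hx.1
          (HasDerivAt.continuousOn fun t ht ↦ hderiv t (hsub ht))
          (fun t ht ↦ hderiv t (hsub (Set.Ioo_subset_Icc_self ht)))
          (memLp_deriv.mono_measure
            (Measure.restrict_mono (Set.Ioc_subset_Icc_self.trans hsub) le_rfl))
    _ ≤ ∫ t in (0 : ℝ)..x, ‖u' t‖ ^ 2 :=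
        mul_le_of_le_one_left (intervalIntegral.integral_nonneg hx.1 fun _ _ ↦ by positivity)
          (by linarith [hx.2])
    _ ≤ ∫ t in (0 : ℝ)..1, ‖u' t‖ ^ 2 :=
        integral_mono_interval le_rfl hx.1 hx.2 (.of_forall fun _ ↦ by positivity)
          ((intervalIntegrable_iff_integrableOn_Icc_of_le zero_le_one).2 sq_integrable)

theorem norm_integral_mul_mul_conj_sub_sq_le (hu : Admissible u u') (hv : Admissible v v') :
    ‖∫ x in (0 : ℝ)..1, u x * v x * (starRingEnd ℂ (u x) - starRingEnd ℂ (v x)) ^ 2‖ ≤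
      ((∫ x in (0 : ℝ)..1, ‖u' x‖ ^ 2) + ∫ x in (0 : ℝ)..1, ‖v' x‖ ^ 2) / 2 *
        ∫ x in (0 : ℝ)..1, ‖u x - v x‖ ^ 2 := by
  have sup_bound {w w' : ℝ → ℂ} (hw : Admissible w w') :
      ∀ᵐ x ∂volume.restrict (Set.Ioc (0 : ℝ) 1), ‖w x‖ ^ 2 ≤ ∫ t in (0 : ℝ)..1, ‖w' t‖ ^ 2 :=
    ae_restrict_of_forall_mem measurableSet_Ioc fun _ hx ↦
      hw.norm_sq_le_integral_norm_deriv_sq (Set.Ioc_subset_Icc_self hx)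
  have diff_integrable : IntervalIntegrable (fun x ↦ ‖u x - v x‖ ^ 2) volume 0 1 :=
    ((hu.continuousOn.sub hv.continuousOn).norm.pow 2).intervalIntegrable_of_Icc zero_le_one
  simpa only [integral_of_le zero_le_one] using
    _root_.norm_integral_mul_mul_conj_sub_sq_le (sup_bound hu) (sup_bound hv) diff_integrable.1

end Admissible

theorem half_integral_norm_deriv_sq_le_Phi {κ : ℝ} (hκ : 0 ≤ κ) {u u' : ℝ → ℂ}
    (hGN : (∫ x in (0 : ℝ)..1, ‖u x‖ ^ 4) ≤
      (1 / 4) * (∫ x in (0 : ℝ)..1, ‖u' x‖ ^ 2) +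
        (κ / 2) * (∫ x in (0 : ℝ)..1, ‖u x‖ ^ 2) ^ 3) :
    (1 / 2) * (∫ x in (0 : ℝ)..1, ‖u' x‖ ^ 2) ≤ Phi κ u u' := by
  have deriv_nonneg : 0 ≤ ∫ x in (0 : ℝ)..1, ‖u' x‖ ^ 2 :=
    intervalIntegral.integral_nonneg zero_le_one fun _ _ ↦ by positivity
  have mass_nonneg : 0 ≤ ∫ x in (0 : ℝ)..1, ‖u x‖ ^ 2 :=
    intervalIntegral.integral_nonneg zero_le_one fun _ _ ↦ by positivity
  have cubic_nonneg := mul_nonneg hκ (pow_nonneg mass_nonneg 3)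
  have ninth_nonneg := mul_nonneg hκ (pow_nonneg mass_nonneg 9)
  unfold Phi
  linarith

/-- There is `κ₂ > 0` so that
`J(u₁,u₂) ≥ ‖u₁' − u₂'‖₂² + (1/2) κ₂ (Φ(u₁) + Φ(u₂)) ‖u₁ − u₂‖₂²`
for all admissible `u₁, u₂`. -/
theorem Jfun_lower_bound (κ : ℝ) (hκ : 0 < κ)
    (hGN : ∀ u u' : ℝ → ℂ, Admissible u u' →
      (∫ x in (0:ℝ)..1, ‖u x‖ ^ 4) ≤
        (1 / 4) * (∫ x in (0:ℝ)..1, ‖u' x‖ ^ 2) +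
          (κ / 2) * (∫ x in (0:ℝ)..1, ‖u x‖ ^ 2) ^ 3) :
    ∃ κ₂ : ℝ, 0 < κ₂ ∧
      ∀ u₁ u₁' u₂ u₂' : ℝ → ℂ, Admissible u₁ u₁' → Admissible u₂ u₂' →
        (∫ x in (0:ℝ)..1, ‖u₁' x - u₂' x‖ ^ 2)
            + (1 / 2) * κ₂ * (Phi κ u₁ u₁' + Phi κ u₂ u₂') *
                (∫ x in (0:ℝ)..1, ‖u₁ x - u₂ x‖ ^ 2)
          ≤ Jfun κ κ₂ u₁ u₁' u₂ u₂' := by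
  refine ⟨2, two_pos, fun u₁ u₁' u₂ u₂' h₁ h₂ ↦ ?_⟩
  have hΦ₁ := half_integral_norm_deriv_sq_le_Phi hκ.le (hGN u₁ u₁' h₁)
  have hΦ₂ := half_integral_norm_deriv_sq_le_Phi hκ.le (hGN u₂ u₂' h₂)
  have distance_nonneg : 0 ≤ ∫ x in (0 : ℝ)..1, ‖u₁ x - u₂ x‖ ^ 2 :=
    intervalIntegral.integral_nonneg zero_le_one fun _ _ ↦ by positivity
  have quartic_le :
      (∫ x in (0 : ℝ)..1,
        u₁ x * u₂ x * (starRingEnd ℂ (u₁ x) - starRingEnd ℂ (u₂ x)) ^ 2).re ≤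
      (Phi κ u₁ u₁' + Phi κ u₂ u₂') * ∫ x in (0 : ℝ)..1, ‖u₁ x - u₂ x‖ ^ 2 :=
    calc _ ≤ _ := Complex.re_le_norm _
      _ ≤ _ := h₁.norm_integral_mul_mul_conj_sub_sq_le h₂
      _ ≤ _ := mul_le_mul_of_nonneg_right (by linarith) distance_nonneg
  unfold Jfun
  linarith
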